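/- Let D be an ADF. The set of strongly admissible interpretations of D, partially ordered by ≤_i, forms a lattice: every two strongly admissible interpretations have a supremum and an infimum within this set. Moreover this lattice has least element the trivial interpretation v_u and greatest element the grounded interpretation grd(D). -/

import Mathlib

/-- Three truth values: true, false, undecided. -/
inductive TV : Type
  | t | f | u
deriving DecidableEq, Repr

/-- The information order on truth values: u <_i t and u <_i f. -/
def TV.ile (x y : TV) : Prop := x = TV.u ∨ x = y

/-- The information order on interpretations, extended pointwise. -/
def ILE {A : Type*} (v w : A → TV) : Prop := ∀ a, TV.ile (v a) (w a)

/-- An abstract dialectical framework on a set of arguments `A`: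
each argument `a` has an acceptance condition `C a : (A → Bool) → Bool`. -/
structure ADF (A : Type*) where
  C : A → (A → Bool) → Bool

/-- The trivial interpretation mapping every argument to undecided. -/
def trivialInterp (A : Type*) : A → TV := fun _ => TV.u

/-- The parents of `a` are the arguments on which its acceptance condition depends. -/
def ADF.parents {A : Type*} [DecidableEq A] (D : ADF A) (a : A) : Set A :=
  {b | ∃ w : A → Bool, D.C a w ≠ D.C a (Function.update w b (!w b))}

/-- A two-valued assignment `w` completes a three-valued interpretation `v`. -/
def Completes {A : Type*} (w : A → Bool) (v : A → TV) : Prop :=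
  ∀ b, (v b = TV.t → w b = true) ∧ (v b = TV.f → w b = false)

/-- `φ` is irrefutable under `v`: every completion of `v` makes `φ` true. -/
def Irrefutable {A : Type*} (φ : (A → Bool) → Bool) (v : A → TV) : Prop :=
  ∀ w : A → Bool, Completes w v → φ w = true

/-- `φ` is unsatisfiable under `v`: every completion of `v` makes `φ` false. -/
def Unsat {A : Type*} (φ : (A → Bool) → Bool) (v : A → TV) : Prop :=
  ∀ w : A → Bool, Completes w v → φ w = false

open Classical in
/-- The characteristic operator Γ_D of an ADF. -/
noncomputable def Gamma {A : Type*} (D : ADF A) (v : A → TV) : A → TV := fun a =>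
  if Irrefutable (D.C a) v then TV.t
  else if Unsat (D.C a) v then TV.f
  else TV.u

open Classical in
/-- `v|_P`: agrees with `v` on `P` and is undecided elsewhere. -/
noncomputable def restrictTV {A : Type*} (v : A → TV) (P : Set A) : A → TV :=
  fun b => if b ∈ P then v b else TV.u

/-- Strong acceptability/deniability of an argument with respect to interpretation `v`
and set `S`, relative to an excluded set `E` (the first index). An argument `a` with
`v a = t` (resp. `v a = f`) is strongly acceptable (resp. strongly deniable) iff there is
`P ⊆ (parents a ∩ S) \ E` with `φ_a^{v|_P}` irrefutable (resp. unsatisfiable) and every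
`p ∈ P` strongly acceptable/deniable relative to `E ∪ {p}`. -/
inductive SJrel {A : Type*} [DecidableEq A] (D : ADF A) (v : A → TV) (S : Set A) :
    Set A → A → Prop
  | acc (E : Set A) (a : A) (P : Set A)
      (ha : v a = TV.t)
      (hP : P ⊆ (D.parents a ∩ S) \ E)
      (hirr : Irrefutable (D.C a) (restrictTV v P))
      (hrec : ∀ p ∈ P, SJrel D v S (E ∪ {p}) p) : SJrel D v S E a
  | den (E : Set A) (a : A) (P : Set A)
      (ha : v a = TV.f)
      (hP : P ⊆ (D.parents a ∩ S) \ E)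
      (hunsat : Unsat (D.C a) (restrictTV v P))
      (hrec : ∀ p ∈ P, SJrel D v S (E ∪ {p}) p) : SJrel D v S E a

/-- `a` is strongly acceptable/deniable w.r.t. `v` and `S`
(i.e., relative to the excluded set `{a}`). -/
def StronglyJustified {A : Type*} [DecidableEq A] (D : ADF A) (v : A → TV)
    (S : Set A) (a : A) : Prop :=
  SJrel D v S {a} a

/-- `S` is a least set for `a` with respect to `v`. -/
def LeastSet {A : Type*} [DecidableEq A] (D : ADF A) (v : A → TV)
    (a : A) (S : Set A) : Prop :=
  StronglyJustified D v S a ∧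
  ∀ S' : Set A, S'.ncard < S.ncard → ¬ StronglyJustified D v S' a

/-- An interpretation is strongly admissible iff every argument assigned `t`/`f`
is strongly acceptable/deniable w.r.t. `v` and some set `S`. -/
def StronglyAdmissible {A : Type*} [DecidableEq A] (D : ADF A) (v : A → TV) : Prop :=
  ∀ a : A, v a ≠ TV.u → ∃ S : Set A, StronglyJustified D v S a

/-- `g` is the grounded interpretation of `D`: the least fixed point of `Γ_D`. -/
def IsGrounded {A : Type*} (D : ADF A) (g : A → TV) : Prop :=
  Gamma D g = g ∧ ∀ w : A → TV, Gamma D w = w → ILE g w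

/-- An interpretation is admissible iff `v ≤_i Γ_D(v)`. -/
def Admissible {A : Type*} (D : ADF A) (v : A → TV) : Prop :=
  ILE v (Gamma D v)

/-- An interpretation is conflict-free. -/
def ConflictFree {A : Type*} (D : ADF A) (v : A → TV) : Prop :=
  ∀ a : A, (v a = TV.t → ∃ w : A → Bool, Completes w v ∧ D.C a w = true) ∧
           (v a = TV.f → Unsat (D.C a) v)

/-- The join of two interpretations: take `v`'s value where defined, else `w`'s. -/
def joinI {A : Type*} (v w : A → TV) : A → TV :=
  fun a => if v a = TV.u then w a else v a

/-! Without the excluded sets, strong acceptability/deniability becomes plain *derivability*: `a`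
is derivable from `v` when `Γ_D (v|_P) a = v a ≠ u` for some set `P` of derivable arguments. Nothing
is lost. Suppose that `a` is justified relative to `E`, but not relative to `E ∪ {a}`. By induction,
no supporting set occurring in the given justification contains `a`, so this justification avoids
`a` after all. Hence excluded sets can be inserted into any derivation from the leaves upwards, and
`v` is strongly admissible iff it decides only derivable arguments.

Derivability is monotone in `v`, because `Γ_D` is. Restricting `v` to its derivable arguments
therefore gives the greatest strongly admissible interpretation below `v`, its core. The infimum of
`v` and `w` is the core of their pointwise meet. By induction on derivations, every strongly
admissible interpretation lies below `grd(D)`; so any two are compatible, and their pointwise join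
is their supremum. Finally, the core of `grd(D)` is a fixed point of `Γ_D`, so it equals `grd(D)`.
-/

section Information

variable {A : Type*} {v v' v₁ v₂ v₃ : A → TV}

theorem TV.ile.eq_of_ne_u {x y : TV} (h : TV.ile x y) (hx : x ≠ TV.u) : x = y :=
  h.resolve_left hx

protected theorem ILE.refl (v : A → TV) : ILE v v := fun _ => Or.inr rfl

protected theorem ILE.trans (h : ILE v₁ v₂) (h' : ILE v₂ v₃) : ILE v₁ v₃ := by
  intro a
  rcases h a with hu | heq
  · exact Or.inl hu
  · rw [heq]
    exact h' a

theorem ILE.antisymm (h : ILE v v') (h' : ILE v' v) : v = v' := by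
  funext a
  rcases h a with hu | heq
  · by_contra hne
    exact hne ((h' a).eq_of_ne_u fun hu' => hne (hu.trans hu'.symm)).symm
  · exact heq

theorem trivialInterp_ile (v : A → TV) : ILE (trivialInterp A) v := fun _ => Or.inl rfl

theorem ile_joinI_left (v w : A → TV) : ILE v (joinI v w) := by
  intro a
  by_cases ha : v a = TV.u
  · exact Or.inl ha
  · exact Or.inr (by simp [joinI, ha])

/-- `joinI` favours its first argument; where both are decided, the common bound `b` forces them to
agree. -/
theorem ile_joinI_right {v w b : A → TV} (hv : ILE v b) (hw : ILE w b) : ILE w (joinI v w) := by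
  intro a
  by_cases ha : v a = TV.u
  · exact Or.inr (by simp [joinI, ha])
  · have hjoin : joinI v w a = b a := by simp [joinI, ha, ← (hv a).eq_of_ne_u ha]
    rw [hjoin]
    exact hw a

theorem joinI_ile {v w b : A → TV} (hv : ILE v b) (hw : ILE w b) : ILE (joinI v w) b := by
  intro a
  unfold joinI
  split_ifs
  · exact hw a
  · exact hv a

/-- The pointwise meet of two interpretations: the consensus of `v` and `w`, undecided wherever
they differ. -/
def meetI (v w : A → TV) : A → TV := fun a => if v a = w a then v a else TV.u

theorem meetI_ile_left (v w : A → TV) : ILE (meetI v w) v := by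
  intro a
  unfold meetI TV.ile
  split_ifs <;> simp

theorem meetI_ile_right (v w : A → TV) : ILE (meetI v w) w := by
  intro a
  unfold meetI TV.ile
  split_ifs with h <;> simp [h]

theorem ile_meetI {b v w : A → TV} (hv : ILE b v) (hw : ILE b w) : ILE b (meetI v w) := by
  intro a
  by_cases ha : b a = TV.u
  · exact Or.inl ha
  · exact Or.inr (by simp [meetI, ← (hv a).eq_of_ne_u ha, ← (hw a).eq_of_ne_u ha])

theorem restrictTV_of_mem {P : Set A} {a : A} (h : a ∈ P) : restrictTV v P a = v a :=
  if_pos h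

theorem restrictTV_of_notMem {P : Set A} {a : A} (h : a ∉ P) : restrictTV v P a = TV.u :=
  if_neg h

theorem restrictTV_ile_iff {P : Set A} :
    ILE (restrictTV v P) v' ↔ ∀ p ∈ P, TV.ile (v p) (v' p) := by
  refine ⟨fun h p hp => restrictTV_of_mem (v := v) hp ▸ h p, fun h a => ?_⟩
  by_cases ha : a ∈ P
  · rw [restrictTV_of_mem ha]
    exact h a ha
  · exact Or.inl (restrictTV_of_notMem ha)

theorem restrictTV_ile (v : A → TV) (P : Set A) : ILE (restrictTV v P) v :=
  restrictTV_ile_iff.2 fun _ _ => Or.inr rfl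

theorem restrictTV_congr {P : Set A} (h : Set.EqOn v v' P) : restrictTV v P = restrictTV v' P := by
  funext a
  by_cases ha : a ∈ P
  · rw [restrictTV_of_mem ha, restrictTV_of_mem ha, h ha]
  · rw [restrictTV_of_notMem ha, restrictTV_of_notMem ha]

theorem restrictTV_inter_eqOn (v : A → TV) (P Q : Set A) :
    Set.EqOn (restrictTV v (P ∩ Q)) (restrictTV v Q) P := by
  intro a haP
  by_cases haQ : a ∈ Q
  · rw [restrictTV_of_mem (Set.mem_inter haP haQ), restrictTV_of_mem haQ]
  · rw [restrictTV_of_notMem fun h => haQ h.2, restrictTV_of_notMem haQ]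

end Information

section CharacteristicOperator

variable {A : Type*} {D : ADF A} {v v' : A → TV} {a : A}

theorem completes_decide (v : A → TV) : Completes (fun a => decide (v a = TV.t)) v :=
  fun b => ⟨fun h => by simp [h], fun h => by simp [h]⟩

theorem Completes.anti {w : A → Bool} (hw : Completes w v') (h : ILE v v') : Completes w v := by
  intro b
  rcases h b with hu | heq
  · simp [hu]
  · rw [heq]
    exact hw b

theorem Completes.exists_eqOn {s : Set A} {w : A → Bool} (hw : Completes w v)
    (h : Set.EqOn v v' s) : ∃ w', Completes w' v' ∧ Set.EqOn w' w s := by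
  classical
  refine ⟨s.piecewise w fun a => decide (v' a = TV.t), fun b => ?_, s.piecewise_eqOn _ _⟩
  by_cases hb : b ∈ s
  · rw [Set.piecewise_eq_of_mem _ _ _ hb, ← h hb]
    exact hw b
  · rw [Set.piecewise_eq_of_notMem _ _ _ hb]
    exact completes_decide v' b

theorem gamma_eq_t : Gamma D v a = TV.t ↔ Irrefutable (D.C a) v := by
  unfold Gamma
  split_ifs <;> simp_all

/-- Every interpretation has a completion, so no condition is both irrefutable and unsatisfiable;
hence the order of the tests in `Gamma` is immaterial. -/
theorem gamma_eq_f : Gamma D v a = TV.f ↔ Unsat (D.C a) v := by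
  have hexcl : Irrefutable (D.C a) v → ¬ Unsat (D.C a) v := fun h h' =>
    Bool.false_ne_true ((h' _ (completes_decide v)).symm.trans (h _ (completes_decide v)))
  unfold Gamma
  split_ifs <;> simp_all

theorem gamma_mono (D : ADF A) (h : ILE v v') : ILE (Gamma D v) (Gamma D v') := by
  intro a
  cases hx : Gamma D v a with
  | u => exact Or.inl rfl
  | t => exact Or.inr (gamma_eq_t.2 fun w hw => gamma_eq_t.1 hx w (hw.anti h)).symm
  | f => exact Or.inr (gamma_eq_f.2 fun w hw => gamma_eq_f.1 hx w (hw.anti h)).symm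

theorem gamma_congr {s : Set A} (hs : DependsOn (D.C a) s) (h : Set.EqOn v v' s) :
    Gamma D v a = Gamma D v' a := by
  have hforall {v₁ v₂ : A → TV} (h₁₂ : Set.EqOn v₁ v₂ s) (x : Bool)
      (hx : ∀ w, Completes w v₁ → D.C a w = x) (w : A → Bool) (hw : Completes w v₂) :
      D.C a w = x := by
    obtain ⟨w', hw', heq⟩ := hw.exists_eqOn h₁₂.symm
    exact (hs fun b hb => (heq hb).symm).trans (hx w' hw')
  have hirr : Irrefutable (D.C a) v ↔ Irrefutable (D.C a) v' :=
    ⟨hforall h true, hforall h.symm true⟩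
  have hunsat : Unsat (D.C a) v ↔ Unsat (D.C a) v' :=
    ⟨hforall h false, hforall h.symm false⟩
  classical exact if_congr hirr rfl (if_congr hunsat rfl rfl)

end CharacteristicOperator

section Parents

variable {A : Type*} [DecidableEq A] {D : ADF A} {a : A}

theorem ADF.C_update_of_notMem_parents {b : A} (hb : b ∉ D.parents a) (w : A → Bool) (x : Bool) :
    D.C a (Function.update w b x) = D.C a w := by
  by_cases hx : x = w b
  · rw [hx, Function.update_eq_self]
  · rw [Bool.eq_not_of_ne hx]
    by_contra hne
    exact hb ⟨w, Ne.symm hne⟩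

theorem ADF.C_piecewise_of_eqOn_parents {w w' : A → Bool} (h : Set.EqOn w w' (D.parents a))
    (s : Finset A) : D.C a (s.piecewise w' w) = D.C a w := by
  induction s using Finset.induction_on with
  | empty => rw [Finset.piecewise_empty]
  | insert b s hb ih =>
    rw [Finset.piecewise_insert, ← ih]
    by_cases hpar : b ∈ D.parents a
    · have hval : w' b = s.piecewise w' w b := by
        rw [Finset.piecewise_eq_of_notMem _ _ _ hb, h hpar]
      rw [hval, Function.update_eq_self]
    · exact C_update_of_notMem_parents hpar _ _

/-- Parents are detected by single flips, so over infinitely many arguments a condition need not be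
determined by them: that infinitely many arguments are true is a condition without parents. -/
theorem ADF.dependsOn_parents {s : Set A} (hfin : s.Finite) (hs : DependsOn (D.C a) s) :
    DependsOn (D.C a) (D.parents a) := by
  intro w w' h
  calc D.C a w = D.C a (hfin.toFinset.piecewise w' w) :=
        (C_piecewise_of_eqOn_parents (fun b hb => h b hb) _).symm
    _ = D.C a w' := hs fun b hb =>
        Finset.piecewise_eq_of_mem _ _ _ (hfin.mem_toFinset.2 hb)

end Parents

section Derivability

variable {A : Type*} {D : ADF A} {v v' : A → TV} {a : A}

/-- `P` supports the value of `a` under `v`: this value is decided and `Γ_D (v|_P)` yields it.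
The two cases of strong acceptability and strong deniability are treated at once in this form. -/
def Supports (D : ADF A) (v : A → TV) (P : Set A) (a : A) : Prop :=
  v a ≠ TV.u ∧ Gamma D (restrictTV v P) a = v a

theorem Supports.gamma_eq {P : Set A} (h : Supports D v P a) (hle : ILE (restrictTV v P) v') :
    Gamma D v' a = v a := by
  have hne : Gamma D (restrictTV v P) a ≠ TV.u := h.2 ▸ h.1
  exact ((gamma_mono D hle a).eq_of_ne_u hne).symm.trans h.2

theorem Supports.mono {P Q : Set A} (h : Supports D v P a) (hPQ : P ⊆ Q) : Supports D v Q a :=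
  ⟨h.1, h.gamma_eq (restrictTV_ile_iff.2 fun _ hp => Or.inr (restrictTV_of_mem (hPQ hp)).symm)⟩

theorem Supports.congr {P : Set A} (h : Supports D v P a) (ha : v a = v' a)
    (hP : Set.EqOn v v' P) : Supports D v' P a :=
  ⟨ha ▸ h.1, by rw [← restrictTV_congr hP, h.2, ha]⟩

theorem Supports.inter_of_dependsOn {P s : Set A} (h : Supports D v P a)
    (hs : DependsOn (D.C a) s) : Supports D v (s ∩ P) a :=
  ⟨h.1, (gamma_congr hs (restrictTV_inter_eqOn v s P)).trans h.2⟩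

/-- Derivability of `a` from `v`: the value of `a` is supported by a set of derivable arguments.
This is strong acceptability/deniability without the excluded sets and without the restriction of
the supporting set to parents. -/
inductive Derivable (D : ADF A) (v : A → TV) : A → Prop
  | of_supports (a : A) (P : Set A) (hs : Supports D v P a) (hP : ∀ p ∈ P, Derivable D v p) :
      Derivable D v a

theorem Derivable.supports (h : Derivable D v a) : Supports D v {b | Derivable D v b} a := by
  obtain ⟨_, P, hs, hP⟩ := h
  exact hs.mono hP

theorem Derivable.congr (heq : ∀ b, Derivable D v b → v b = v' b) (h : Derivable D v a) :
    Derivable D v' a := by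
  induction h with
  | of_supports a P hs hP ih =>
    exact .of_supports a P (hs.congr (heq a (.of_supports a P hs hP)) fun p hp => heq p (hP p hp))
      ih

theorem Derivable.mono (hle : ILE v v') (h : Derivable D v a) : Derivable D v' a :=
  h.congr fun b hb => (hle b).eq_of_ne_u hb.supports.1

theorem Derivable.eq_of_gamma_ile (hv' : ILE (Gamma D v') v') (h : Derivable D v a) :
    v a = v' a := by
  induction h with
  | of_supports a P hs _ ih =>
    have hgamma : Gamma D v' a = v a :=
      hs.gamma_eq (restrictTV_ile_iff.2 fun p hp => Or.inr (ih p hp))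
    rw [← hgamma]
    exact (hv' a).eq_of_ne_u (hgamma ▸ hs.1)

/-- The core of `v`, that is, its restriction to the arguments derivable from it: the greatest
strongly admissible interpretation below `v`. -/
noncomputable def core (D : ADF A) (v : A → TV) : A → TV :=
  restrictTV v {a | Derivable D v a}

theorem core_ile (D : ADF A) (v : A → TV) : ILE (core D v) v := restrictTV_ile _ _

theorem core_of_derivable (h : Derivable D v a) : core D v a = v a :=
  restrictTV_of_mem (P := {a | Derivable D v a}) h

theorem core_of_not_derivable (h : ¬ Derivable D v a) : core D v a = TV.u :=
  restrictTV_of_notMem (P := {a | Derivable D v a}) h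

theorem derivable_core_of_ne_u (h : core D v a ≠ TV.u) : Derivable D (core D v) a := by
  have hv : Derivable D v a := by
    by_contra hnot
    exact h (core_of_not_derivable hnot)
  exact hv.congr fun _ hb => (core_of_derivable hb).symm

theorem gamma_core_of_gamma_ile (hv : ILE (Gamma D v) v) : Gamma D (core D v) = core D v := by
  funext a
  by_cases h : Derivable D v a
  · rw [core_of_derivable h]
    exact h.supports.2
  · rw [core_of_not_derivable h]
    by_contra hne
    have hva : Gamma D (core D v) a = v a :=
      ((gamma_mono D (core_ile D v)).trans hv a).eq_of_ne_u hne
    exact h (.of_supports a _ ⟨hva ▸ hne, hva⟩ fun _ hp => hp)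

theorem IsGrounded.gamma_ile {g : A → TV} (hg : IsGrounded D g) : ILE (Gamma D g) g := by
  rw [hg.1]
  exact ILE.refl g

theorem IsGrounded.core_eq {g : A → TV} (hg : IsGrounded D g) : core D g = g :=
  (core_ile D g).antisymm (hg.2 _ (gamma_core_of_gamma_ile hg.gamma_ile))

end Derivability

section ExcludedSets

variable {A : Type*} [DecidableEq A] {D : ADF A} {v : A → TV} {S E : Set A} {a : A}

theorem SJrel.of_supports {P : Set A} (hs : Supports D v P a) (hP : P ⊆ (D.parents a ∩ S) \ E)
    (hrec : ∀ p ∈ P, SJrel D v S (E ∪ {p}) p) : SJrel D v S E a := by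
  obtain ⟨hne, hgamma⟩ := hs
  cases hv : v a with
  | u => exact absurd hv hne
  | t => exact .acc E a P hv hP (gamma_eq_t.1 (hgamma.trans hv)) hrec
  | f => exact .den E a P hv hP (gamma_eq_f.1 (hgamma.trans hv)) hrec

@[elab_as_elim]
theorem SJrel.supports_induction {motive : ∀ E a, SJrel D v S E a → Prop}
    (of_supports : ∀ (E : Set A) (a : A) (P : Set A) (hs : Supports D v P a)
      (hP : P ⊆ (D.parents a ∩ S) \ E) (hrec : ∀ p ∈ P, SJrel D v S (E ∪ {p}) p),
      (∀ p hp, motive (E ∪ {p}) p (hrec p hp)) → motive E a (.of_supports hs hP hrec))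
    (h : SJrel D v S E a) : motive E a h := by
  induction h with
  | acc E a P ha hP hirr hrec ih =>
    exact of_supports E a P ⟨by simp [ha], (gamma_eq_t.2 hirr).trans ha.symm⟩ hP hrec ih
  | den E a P ha hP hunsat hrec ih =>
    exact of_supports E a P ⟨by simp [ha], (gamma_eq_f.2 hunsat).trans ha.symm⟩ hP hrec ih

theorem SJrel.derivable (h : SJrel D v S E a) : Derivable D v a := by
  induction h using SJrel.supports_induction with
  | of_supports _ a P hs _ _ ih => exact .of_supports a P hs ih

theorem SJrel.anti {E' : Set A} (h : SJrel D v S E a) (hE : E' ⊆ E) : SJrel D v S E' a := by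
  induction h using SJrel.supports_induction generalizing E' with
  | of_supports E a P hs hP _ ih =>
    exact .of_supports hs (hP.trans (Set.sdiff_subset_sdiff_right hE)) fun p hp =>
      ih p hp (Set.union_subset_union_left _ hE)

theorem SJrel.union_of_forall_not {F : Set A} (h : SJrel D v S E a)
    (hF : ∀ x ∈ F, ¬ SJrel D v S (E ∪ F) x) : SJrel D v S (E ∪ F) a := by
  induction h using SJrel.supports_induction with
  | of_supports E a P hs hP _ ih =>
    have hrec : ∀ p ∈ P, SJrel D v S (E ∪ F ∪ {p}) p := by
      intro p hp
      rw [Set.union_right_comm]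
      refine ih p hp fun x hx hsj => hF x hx (hsj.anti ?_)
      exact Set.union_subset_union_left _ Set.subset_union_left
    refine .of_supports hs (fun p hp => ⟨(hP hp).1, ?_⟩) hrec
    rintro (hpE | hpF)
    · exact (hP hp).2 hpE
    · exact hF p hpF ((hrec p hp).anti Set.subset_union_left)

theorem SJrel.union_self (h : SJrel D v S E a) : SJrel D v S (E ∪ {a}) a := by
  by_contra hnot
  exact hnot (h.union_of_forall_not fun _ hx => Set.mem_singleton_iff.1 hx ▸ hnot)

theorem Derivable.sjrel_empty (hD : ∀ b, DependsOn (D.C b) (D.parents b)) (h : Derivable D v a) :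
    SJrel D v Set.univ ∅ a := by
  induction h with
  | of_supports a P hs _ ih =>
    exact .of_supports (hs.inter_of_dependsOn (hD a)) (fun p hp => ⟨⟨hp.1, trivial⟩, id⟩)
      fun p hp => (ih p hp.2).union_self

theorem Derivable.stronglyJustified (hD : ∀ b, DependsOn (D.C b) (D.parents b))
    (h : Derivable D v a) : StronglyJustified D v Set.univ a := by
  simpa only [StronglyJustified, Set.empty_union] using (h.sjrel_empty hD).union_self

end ExcludedSets

section StrongAdmissibility

variable {A : Type*} [DecidableEq A] {D : ADF A} {v w : A → TV}

theorem StronglyAdmissible.derivable (hv : StronglyAdmissible D v) {a : A} (ha : v a ≠ TV.u) :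
    Derivable D v a :=
  let ⟨_, hS⟩ := hv a ha
  SJrel.derivable hS

theorem stronglyAdmissible_of_derivable (hD : ∀ a, DependsOn (D.C a) (D.parents a))
    (h : ∀ a, v a ≠ TV.u → Derivable D v a) : StronglyAdmissible D v :=
  fun a ha => ⟨Set.univ, (h a ha).stronglyJustified hD⟩

theorem stronglyAdmissible_trivialInterp (D : ADF A) : StronglyAdmissible D (trivialInterp A) :=
  fun _ ha => absurd rfl ha

theorem stronglyAdmissible_core (hD : ∀ a, DependsOn (D.C a) (D.parents a)) (v : A → TV) :
    StronglyAdmissible D (core D v) :=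
  stronglyAdmissible_of_derivable hD fun _ => derivable_core_of_ne_u

theorem StronglyAdmissible.ile_core (hv : StronglyAdmissible D v) (h : ILE v w) :
    ILE v (core D w) := by
  intro a
  by_cases ha : v a = TV.u
  · exact Or.inl ha
  · rw [core_of_derivable ((hv.derivable ha).mono h)]
    exact h a

theorem StronglyAdmissible.ile_of_gamma_ile (hv : StronglyAdmissible D v)
    (hw : ILE (Gamma D w) w) : ILE v w := by
  intro a
  by_cases ha : v a = TV.u
  · exact Or.inl ha
  · exact Or.inr ((hv.derivable ha).eq_of_gamma_ile hw)

theorem stronglyAdmissible_joinI (hD : ∀ a, DependsOn (D.C a) (D.parents a))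
    (hv : StronglyAdmissible D v) (hw : StronglyAdmissible D w) {b : A → TV}
    (hvb : ILE v b) (hwb : ILE w b) : StronglyAdmissible D (joinI v w) := by
  refine stronglyAdmissible_of_derivable hD fun a ha => ?_
  by_cases hva : v a = TV.u
  · have hwa : w a ≠ TV.u := by simpa only [joinI, if_pos hva] using ha
    exact (hw.derivable hwa).mono (ile_joinI_right hvb hwb)
  · exact (hv.derivable hva).mono (ile_joinI_left v w)

theorem IsGrounded.stronglyAdmissible (hD : ∀ a, DependsOn (D.C a) (D.parents a)) {g : A → TV}
    (hg : IsGrounded D g) : StronglyAdmissible D g :=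
  hg.core_eq ▸ stronglyAdmissible_core hD g

end StrongAdmissibility

theorem strongly_admissible_lattice_general {A : Type*} [DecidableEq A] (D : ADF A)
    (hD : ∀ a, DependsOn (D.C a) (D.parents a)) (g : A → TV) (hg : IsGrounded D g) :
    (∀ v w : A → TV, StronglyAdmissible D v → StronglyAdmissible D w →
      ∃ s : A → TV, StronglyAdmissible D s ∧ ILE v s ∧ ILE w s ∧
        ∀ t : A → TV, StronglyAdmissible D t → ILE v t → ILE w t → ILE s t) ∧
    (∀ v w : A → TV, StronglyAdmissible D v → StronglyAdmissible D w →
      ∃ m : A → TV, StronglyAdmissible D m ∧ ILE m v ∧ ILE m w ∧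
        ∀ t : A → TV, StronglyAdmissible D t → ILE t v → ILE t w → ILE t m) ∧
    StronglyAdmissible D (trivialInterp A) ∧
    (∀ v : A → TV, StronglyAdmissible D v → ILE (trivialInterp A) v) ∧
    StronglyAdmissible D g ∧
    (∀ v : A → TV, StronglyAdmissible D v → ILE v g) := by
  refine ⟨fun v w hv hw => ?_, fun v w _ _ => ?_, stronglyAdmissible_trivialInterp D,
    fun v _ => trivialInterp_ile v, hg.stronglyAdmissible hD,
    fun v hv => hv.ile_of_gamma_ile hg.gamma_ile⟩
  · have hvg : ILE v g := hv.ile_of_gamma_ile hg.gamma_ile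
    have hwg : ILE w g := hw.ile_of_gamma_ile hg.gamma_ile
    exact ⟨joinI v w, stronglyAdmissible_joinI hD hv hw hvg hwg, ile_joinI_left v w,
      ile_joinI_right hvg hwg, fun t _ => joinI_ile⟩
  · have hcore : ILE (core D (meetI v w)) (meetI v w) := core_ile D _
    exact ⟨core D (meetI v w), stronglyAdmissible_core hD _, hcore.trans (meetI_ile_left v w),
      hcore.trans (meetI_ile_right v w), fun t ht htv htw => ht.ile_core (ile_meetI htv htw)⟩

/-- The strongly admissible interpretations of an ADF form a lattice
under ≤_i, with least element the trivial interpretation and greatest element the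
grounded interpretation. -/
theorem strongly_admissible_lattice {A : Type*} [Fintype A] [DecidableEq A]
    (D : ADF A) (g : A → TV) (hg : IsGrounded D g) :
    (∀ v w : A → TV, StronglyAdmissible D v → StronglyAdmissible D w →
      ∃ s : A → TV, StronglyAdmissible D s ∧ ILE v s ∧ ILE w s ∧
        ∀ t : A → TV, StronglyAdmissible D t → ILE v t → ILE w t → ILE s t) ∧
    (∀ v w : A → TV, StronglyAdmissible D v → StronglyAdmissible D w →
      ∃ m : A → TV, StronglyAdmissible D m ∧ ILE m v ∧ ILE m w ∧
        ∀ t : A → TV, StronglyAdmissible D t → ILE t v → ILE t w → ILE t m) ∧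
    StronglyAdmissible D (trivialInterp A) ∧
    (∀ v : A → TV, StronglyAdmissible D v → ILE (trivialInterp A) v) ∧
    StronglyAdmissible D g ∧
    (∀ v : A → TV, StronglyAdmissible D v → ILE v g) :=
  strongly_admissible_lattice_general D
    (fun _ => ADF.dependsOn_parents Set.finite_univ (dependsOn_univ _)) g hg
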